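/- Let k, m be positive integers. The dimension of R(k,m) as a vector space over ZMod 2 equals the product (m+1)(m+2)…(m+k). -/

import Mathlib

/-!
The generator `h_{m+i}(x_1, …, x_{k+1-i})` is, with `j = k+1-i`, the polynomial
`h_{N+1-j}(x_1, …, x_j)` where `N = m + k`. The recurrence
`h_{d+1}(l, x) = h_{d+1}(l) + x * h_d(l, x)` shows that `h_d(x_1, …, x_j)` is monic of degree `d`
in its last variable `x_j` (`completeHomog_monic`). So the generators form a triangular system:
writing `triIdeal n N` for the ideal generated by the first `n` of them in `n` variables, the quotient by
`triIdeal (n+1) N` is obtained from `A = (ZMod 2)[x_1, …, x_n] / triIdeal n N` by adjoining a root of a monic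
polynomial of degree `N - n`, hence is free of rank `N - n` over `A`
(`finrank_quotient_map_C_sup_span`). By induction the dimension is
`N (N-1) ⋯ (N-n+1)`, which for `n = k` is the claimed product.
-/

open scoped TensorProduct

/-- Complete homogeneous symmetric polynomial of degree `d` in a list of elements
of a commutative (semi)ring: `h_d(l)`. -/
noncomputable def completeHomog {R : Type*} [CommSemiring R] : List R → ℕ → R
  | [], 0 => 1
  | [], _ + 1 => 0
  | x :: l, d => ∑ t ∈ Finset.range (d + 1), x ^ t * completeHomog l (d - t)

/-- Elementary symmetric polynomial of degree `d` in a list of elements: `e_d(l)`. -/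
noncomputable def elemSymm {R : Type*} [CommSemiring R] : List R → ℕ → R
  | _, 0 => 1
  | [], _ + 1 => 0
  | x :: l, d + 1 => elemSymm l (d + 1) + x * elemSymm l d

/-- The ideal of `(ZMod 2)[x_1, …, x_k]` generated by the complete homogeneous
symmetric polynomials `h_{m+i}(x_1, …, x_{k+1-i})` for `1 ≤ i ≤ k`. -/
noncomputable def flagIdeal (k m : ℕ) : Ideal (MvPolynomial (Fin k) (ZMod 2)) :=
  Ideal.span { p | ∃ i : ℕ, 1 ≤ i ∧ i ≤ k ∧
    p = completeHomog (((List.finRange k).take (k + 1 - i)).map MvPolynomial.X) (m + i) }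

/-- `R(k,m)`, the quotient of `(ZMod 2)[x_1, …, x_k]` by `flagIdeal k m`;
this is the mod-2 cohomology ring of the real flag manifold `F(1^k, m)`. -/
abbrev FlagRing (k m : ℕ) : Type :=
  MvPolynomial (Fin k) (ZMod 2) ⧸ flagIdeal k m

/-- The image of the variable `x_{j+1}` in `R(k,m)` (`j` is 0-indexed). -/
noncomputable def xGen (k m : ℕ) (j : Fin k) : FlagRing k m :=
  Ideal.Quotient.mk (flagIdeal k m) (MvPolynomial.X j)

/-- The zero-divisor `z_{j+1} = x_{j+1} ⊗ 1 + 1 ⊗ x_{j+1}` in `R(k,m) ⊗ R(k,m)`. -/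
noncomputable def zGen (k m : ℕ) (j : Fin k) :
    FlagRing k m ⊗[ZMod 2] FlagRing k m :=
  xGen k m j ⊗ₜ 1 + 1 ⊗ₜ xGen k m j

/-- `x_{i+1,j+1}` in the `s`-fold tensor power `R(k,m)^{⊗ s}`: the element having
`x_{j+1}` in the `(i+1)`-st tensor factor and `1` elsewhere (`i`, `j` 0-indexed). -/
noncomputable def xT (k m s : ℕ) (i : Fin s) (j : Fin k) :
    ⨂[ZMod 2] _ : Fin s, FlagRing k m :=
  PiTensorProduct.tprod (ZMod 2) (fun t => if t = i then xGen k m j else 1)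

/-- The `s`-th zero-divisor `z_{i+1,j+1} = x_{1,j+1} + x_{i+1,j+1}` in `R(k,m)^{⊗ s}`. -/
noncomputable def zT (k m s : ℕ) (hs : 0 < s) (i : Fin s) (j : Fin k) :
    ⨂[ZMod 2] _ : Fin s, FlagRing k m :=
  xT k m s ⟨0, hs⟩ j + xT k m s i j

/-! ### Complete homogeneous polynomials -/

theorem completeHomog_zero {R : Type*} [CommSemiring R] (l : List R) : completeHomog l 0 = 1 := by
  induction l with
  | nil => simp [completeHomog]
  | cons x l ih => simp [completeHomog, ih]

theorem completeHomog_cons_succ {R : Type*} [CommSemiring R] (x : R) (l : List R) (d : ℕ) :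
    completeHomog (x :: l) (d + 1) = completeHomog l (d + 1) + x * completeHomog (x :: l) d := by
  simp only [completeHomog]
  rw [Finset.sum_range_succ', Finset.mul_sum, add_comm]
  simp [pow_succ', mul_assoc]

/-- The recurrence of `completeHomog_cons_succ`, with the distinguished variable at the end of the
list instead of at its head. -/
theorem completeHomog_append_succ {R : Type*} [CommSemiring R] (x : R) (l : List R) (d : ℕ) :
    completeHomog (l ++ [x]) (d + 1) =
      completeHomog l (d + 1) + x * completeHomog (l ++ [x]) d := by
  induction l generalizing d with
  | nil => simpa using completeHomog_cons_succ x [] d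
  | cons y l ih =>
    induction d with
    | zero =>
      simp only [List.cons_append, completeHomog_cons_succ, completeHomog_zero, ih]
      ring
    | succ d ihd =>
      simp only [List.cons_append] at ihd ⊢
      rw [completeHomog_cons_succ, ih, completeHomog_cons_succ y l (d + 1)]
      nth_rewrite 1 [ihd]
      rw [completeHomog_cons_succ y (l ++ [x]) d]
      ring

theorem map_completeHomog {R S : Type*} [CommSemiring R] [CommSemiring S] (f : R →+* S)
    (l : List R) (d : ℕ) : f (completeHomog l d) = completeHomog (l.map f) d := by
  induction l generalizing d with
  | nil => cases d <;> simp [completeHomog]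
  | cons x l ih => simp [completeHomog, ih]

theorem completeHomog_monic {R : Type*} [CommRing R] [Nontrivial R] (l : List R) (d : ℕ) :
    (completeHomog (l.map Polynomial.C ++ [Polynomial.X]) d).Monic ∧
      (completeHomog (l.map Polynomial.C ++ [Polynomial.X]) d).natDegree = d := by
  induction d with
  | zero => simp [completeHomog_zero]
  | succ d ih =>
    obtain ⟨hm, hd⟩ := ih
    rw [completeHomog_append_succ, ← map_completeHomog, add_comm]
    have hXm := Polynomial.monic_X.mul hm
    have hXd : (Polynomial.X * completeHomog (l.map Polynomial.C ++ [Polynomial.X]) d).natDegree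
        = d + 1 := by
      rw [Polynomial.natDegree_X_mul hm.ne_zero, hd]
    refine ⟨hXm.add_of_left ?_, by rw [Polynomial.natDegree_add_C, hXd]⟩
    refine Polynomial.degree_C_le.trans_lt ?_
    rw [← Polynomial.natDegree_pos_iff_degree_pos, hXd]
    omega

/-! ### Adjoining a root of a monic polynomial -/

/-- Ring isomorphisms between `ZMod 2`-algebras are automatically `ZMod 2`-linear. -/
theorem finrank_eq_of_ringEquiv {A B : Type*} [CommRing A] [CommRing B] [Algebra (ZMod 2) A]
    [Algebra (ZMod 2) B] (e : A ≃+* B) :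
    Module.finrank (ZMod 2) A = Module.finrank (ZMod 2) B :=
  LinearEquiv.finrank_eq
    { e.toAddEquiv with map_smul' := fun c x => ZMod.map_smul e.toAddEquiv.toAddMonoidHom c x }

theorem finrank_quotient_span_monic {A : Type*} [CommRing A] [Algebra (ZMod 2) A]
    {q : Polynomial A} (hq : q.Monic) :
    Module.finrank (ZMod 2) (Polynomial A ⧸ Ideal.span {q}) =
      Module.finrank (ZMod 2) A * q.natDegree := by
  rcases subsingleton_or_nontrivial A with h | h
  · have : Subsingleton (Polynomial A ⧸ Ideal.span {q}) :=
      Ideal.Quotient.mk_surjective.subsingleton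
    simp [Module.finrank_zero_of_subsingleton]
  · have := hq.free_quotient
    rw [← finrank_quotient_span_eq_natDegree' hq, Module.finrank_mul_finrank]

/-- The quotient of `R[X]` by `I` and a monic `q` is `(R ⧸ I)[X] ⧸ (q)`, hence free of rank
`natDegree q` over `R ⧸ I`. -/
theorem finrank_quotient_map_C_sup_span {R : Type*} [CommRing R] [Algebra (ZMod 2) R]
    (I : Ideal R) {q : Polynomial R} (hq : q.Monic) :
    Module.finrank (ZMod 2) (Polynomial R ⧸ (I.map Polynomial.C ⊔ Ideal.span {q})) =
      Module.finrank (ZMod 2) (R ⧸ I) * q.natDegree := by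
  rcases subsingleton_or_nontrivial (R ⧸ I) with h | h
  · have : Subsingleton (Polynomial R ⧸ (I.map Polynomial.C ⊔ Ideal.span {q})) := by
      rw [Ideal.Quotient.subsingleton_iff] at h ⊢
      simp [h, Ideal.map_top]
    simp [Module.finrank_zero_of_subsingleton]
  · rw [← hq.natDegree_map (Ideal.Quotient.mk I), ← finrank_quotient_span_monic (hq.map _)]
    refine (finrank_eq_of_ringEquiv ((Ideal.quotientEquiv _ _
      I.polynomialQuotientEquivQuotientPolynomial ?_).trans
        (DoubleQuot.quotQuotEquivQuotSup _ _))).symm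
    rw [Ideal.map_span, Ideal.map_span, Set.image_singleton, Set.image_singleton]
    congr 2
    exact (Ideal.polynomialQuotientEquivQuotientPolynomial_map_mk I q).symm

/-! ### The triangular system -/

/-- The ideal of `(ZMod 2)[x_1, …, x_n]` generated by `h_{N+1-j}(x_1, …, x_j)` for
`1 ≤ j ≤ n`. It agrees with `flagIdeal k m` for `n = k` and `N = m + k`. -/
noncomputable def triIdeal (n N : ℕ) : Ideal (MvPolynomial (Fin n) (ZMod 2)) :=
  Ideal.span { p | ∃ j : ℕ, 1 ≤ j ∧ j ≤ n ∧
    p = completeHomog (((List.finRange n).take j).map MvPolynomial.X) (N + 1 - j) }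

theorem flagIdeal_eq_triIdeal (k m : ℕ) : flagIdeal k m = triIdeal k (m + k) := by
  unfold flagIdeal triIdeal
  congr 1
  ext p
  constructor
  · rintro ⟨i, h1, h2, rfl⟩
    exact ⟨k + 1 - i, by omega, by omega, by congr 1; omega⟩
  · rintro ⟨j, h1, h2, rfl⟩
    refine ⟨k + 1 - j, by omega, by omega, ?_⟩
    rw [show k + 1 - (k + 1 - j) = j by omega, show m + (k + 1 - j) = m + k + 1 - j by omega]

/-- `(ZMod 2)[x_1, …, x_{n+1}]` as polynomials in the last variable `x_{n+1}` over
`(ZMod 2)[x_1, …, x_n]`. -/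
noncomputable def lastVarEquiv (n : ℕ) :
    MvPolynomial (Fin (n + 1)) (ZMod 2) ≃+* Polynomial (MvPolynomial (Fin n) (ZMod 2)) :=
  ((MvPolynomial.renameEquiv (ZMod 2) finSuccEquivLast).trans
    (MvPolynomial.optionEquivLeft (ZMod 2) (Fin n))).toRingEquiv

theorem lastVarEquiv_castSucc (n : ℕ) (i : Fin n) :
    lastVarEquiv n (MvPolynomial.X i.castSucc) = Polynomial.C (MvPolynomial.X i) := by
  simp [lastVarEquiv, MvPolynomial.optionEquivLeft_X_some]

theorem lastVarEquiv_last (n : ℕ) :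
    lastVarEquiv n (MvPolynomial.X (Fin.last n)) = Polynomial.X := by
  simp [lastVarEquiv, MvPolynomial.optionEquivLeft_X_none]

theorem lastVarEquiv_gen_of_le {n j : ℕ} (hj : j ≤ n) (d : ℕ) :
    lastVarEquiv n (completeHomog (((List.finRange (n + 1)).take j).map MvPolynomial.X) d) =
      Polynomial.C (completeHomog (((List.finRange n).take j).map MvPolynomial.X) d) := by
  have h := map_completeHomog (lastVarEquiv n).toRingHom
    (((List.finRange (n + 1)).take j).map MvPolynomial.X) d
  rw [RingEquiv.toRingHom_eq_coe, RingEquiv.coe_toRingHom] at h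
  rw [h, map_completeHomog, List.finRange_succ_last, List.take_append_of_le_length (by simpa),
    ← List.map_take]
  simp only [List.map_map]
  congr 1
  exact List.map_congr_left fun i _ => lastVarEquiv_castSucc n i

theorem lastVarEquiv_gen_last (n d : ℕ) :
    lastVarEquiv n (completeHomog (((List.finRange (n + 1)).take (n + 1)).map MvPolynomial.X) d) =
      completeHomog (((List.finRange n).map MvPolynomial.X).map Polynomial.C ++ [Polynomial.X])
        d := by
  have h := map_completeHomog (lastVarEquiv n).toRingHom
    (((List.finRange (n + 1)).take (n + 1)).map MvPolynomial.X) d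
  rw [RingEquiv.toRingHom_eq_coe, RingEquiv.coe_toRingHom] at h
  rw [h, List.take_of_length_le (by simp), List.finRange_succ_last]
  simp only [List.map_append, List.map_map, List.map_cons, List.map_nil, lastVarEquiv_last]
  congr 2
  exact List.map_congr_left fun i _ => lastVarEquiv_castSucc n i

theorem map_triIdeal_succ (n N : ℕ) :
    (triIdeal (n + 1) N).map (lastVarEquiv n : _ →+* _) =
      (triIdeal n N).map Polynomial.C ⊔ Ideal.span {completeHomog
        (((List.finRange n).map MvPolynomial.X).map Polynomial.C ++ [Polynomial.X]) (N - n)} := by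
  unfold triIdeal
  rw [Ideal.map_span, Ideal.map_span, ← Ideal.span_union]
  congr 1
  ext p
  constructor
  · rintro ⟨_, ⟨j, h1, h2, rfl⟩, rfl⟩
    rcases Nat.le_succ_iff.mp h2 with hj | rfl
    · exact Or.inl ⟨_, ⟨j, h1, hj, rfl⟩, (lastVarEquiv_gen_of_le hj _).symm⟩
    · right
      rw [Set.mem_singleton_iff, show N - n = N + 1 - (n + 1) by omega]
      exact lastVarEquiv_gen_last n _
  · rintro (⟨_, ⟨j, h1, h2, rfl⟩, rfl⟩ | h)
    · exact ⟨_, ⟨j, h1, by omega, rfl⟩, lastVarEquiv_gen_of_le h2 _⟩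
    · rw [Set.mem_singleton_iff] at h
      refine ⟨_, ⟨n + 1, by omega, le_rfl, rfl⟩, ?_⟩
      rw [h, show N - n = N + 1 - (n + 1) by omega]
      exact lastVarEquiv_gen_last n _

theorem finrank_quotient_triIdeal (n N : ℕ) :
    Module.finrank (ZMod 2) (MvPolynomial (Fin n) (ZMod 2) ⧸ triIdeal n N) =
      ∏ j ∈ Finset.range n, (N - j) := by
  induction n with
  | zero =>
    have h : triIdeal 0 N = ⊥ := by
      rw [triIdeal, Ideal.span_eq_bot]
      rintro p ⟨j, h1, h2, -⟩
      omega
    rw [h, finrank_eq_of_ringEquiv ((RingEquiv.quotientBot _).trans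
      (MvPolynomial.isEmptyRingEquiv (ZMod 2) (Fin 0)))]
    simp
  | succ n ih =>
    obtain ⟨hm, hd⟩ := completeHomog_monic
      ((List.finRange n).map (MvPolynomial.X (R := ZMod 2))) (N - n)
    rw [Finset.prod_range_succ, ← ih, ← hd, ← finrank_quotient_map_C_sup_span _ hm]
    exact finrank_eq_of_ringEquiv (Ideal.quotientEquiv _ _ (lastVarEquiv n)
      (map_triIdeal_succ n N).symm)

/-- `dim_{ZMod 2} R(k,m) = (m+1)(m+2)⋯(m+k)`. -/
theorem statement1 (k m : ℕ) (hk : 0 < k) (hm : 0 < m) :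
    Module.finrank (ZMod 2) (FlagRing k m) = ∏ i ∈ Finset.range k, (m + i + 1) := by
  unfold FlagRing
  rw [flagIdeal_eq_triIdeal, finrank_quotient_triIdeal, ← Finset.prod_range_reflect]
  refine Finset.prod_congr rfl fun i hi => ?_
  rw [Finset.mem_range] at hi
  omega
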